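/- arXiv:1207.0472 — 2 statements merged into one kernel-verified Lean document; each statement's English description precedes it below -/
import Mathlib

section
/- Let g be an n-Filippov algebra over K. Then the actions ω̄₀^l and ω̄₀^r, determined by ω̄₀^l(a₁∧…∧a_{n−1}, x) = −[x,a₁,…,a_{n−1}] and ω̄₀^r(x, a₁∧…∧a_{n−1}) = [x,a₁,…,a_{n−1}], are well defined on the exterior power and make g a co-representation over the Leibniz algebra (L_n(g), ω̄₀). -/
open scoped TensorProduct
open PiTensorProduct

/-- The pure wedge `a₁ ∧ … ∧ a_m` as an element of the `m`-th exterior power `⋀[K]^m g`. -/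
noncomputable def wedge (K : Type) [Field K] {g : Type} [AddCommGroup g] [Module K g] {m : ℕ}
    (a : Fin m → g) : ⋀[K]^m g :=
  ⟨ExteriorAlgebra.ιMulti K m a, ExteriorAlgebra.ιMulti_range K m ⟨a, rfl⟩⟩

/-- `M` together with a left action `l` and a right action `r` is a co-representation of the
Leibniz algebra `(h, br)`. -/
def IsCorep {K : Type} [Field K] {h M : Type} [AddCommGroup h] [Module K h]
    [AddCommGroup M] [Module K M] (br : h →ₗ[K] h →ₗ[K] h)
    (l : h →ₗ[K] M →ₗ[K] M) (r : M →ₗ[K] h →ₗ[K] M) : Prop :=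
  (∀ (x y : h) (a : M), l (br x y) a = l x (l y a) - l y (l x a)) ∧
  (∀ (x y : h) (a : M), l y (r a x) = r (l y a) x - r a (br x y)) ∧
  (∀ (x y : h) (a : M), r (r a x) y = r a (br x y) - r (l y a) x)

/-!
Take the bracket itself as right action, `z · (a₁ ∧ … ∧ aₘ) = [z, a₁, …, aₘ]`. In the fundamental
identity for `[[z, a₁, …, aₘ], b₁, …, bₘ]` the summand in which `b` acts on `z` is
`(z · b) · a`, and the others add up to `z · ω̄₀(a, b)`. Hence
`(z · x) · y = (z · y) · x + z · ω̄₀(x, y)` for pure wedges, and for all `x` and `y` by bilinearity.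
When the left action is the negative of the right one, each of the three axioms of a
co-representation is a rearrangement of this single identity.
-/

/-- The fundamental identity of Leibniz `n`-algebras, `n = m + 1`: each right multiplication
`[-, y₁, …, yₘ]` is a derivation of the bracket `f`. -/
def FundamentalIdentity {M : Type*} [AddCommMonoid M] {m : ℕ} (f : (Fin (m + 1) → M) → M) : Prop :=
  ∀ (x : Fin (m + 1) → M) (y : Fin m → M),
    f (Fin.cons (f x) y) = ∑ i, f (Function.update x i (f (Fin.cons (x i) y)))

theorem FundamentalIdentity.cons_cons {M : Type*} [AddCommMonoid M] {m : ℕ}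
    {f : (Fin (m + 1) → M) → M} (hf : FundamentalIdentity f) (z : M) (a b : Fin m → M) :
    f (Fin.cons (f (Fin.cons z a)) b) =
      f (Fin.cons (f (Fin.cons z b)) a) +
        ∑ i, f (Fin.cons z (Function.update a i (f (Fin.cons (a i) b)))) := by
  rw [hf, Fin.sum_univ_succ]
  simp only [Fin.cons_zero, Fin.cons_succ, Fin.update_cons_zero, Fin.cons_update]

section Corepresentation

variable {R H M : Type*} [CommRing R] [AddCommGroup H] [Module R H] [AddCommGroup M] [Module R M]

/-- The notion of co-representation of a Leibniz algebra `(H, br)` over a commutative ring; over a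
field it is `IsCorep`. -/
structure IsCorepresentation (br : H →ₗ[R] H →ₗ[R] H)
    (l : H →ₗ[R] M →ₗ[R] M) (r : M →ₗ[R] H →ₗ[R] M) : Prop where
  left_bracket (x y : H) (a : M) : l (br x y) a = l x (l y a) - l y (l x a)
  left_right (x y : H) (a : M) : l y (r a x) = r (l y a) x - r a (br x y)
  right_right (x y : H) (a : M) : r (r a x) y = r a (br x y) - r (l y a) x

theorem isCorepresentation_neg_flip {br : H →ₗ[R] H →ₗ[R] H} {r : M →ₗ[R] H →ₗ[R] M}
    (hr : ∀ a x y, r (r a x) y = r (r a y) x + r a (br x y)) :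
    IsCorepresentation br (-r.flip) r := by
  constructor <;> intro x y a <;>
    simp only [LinearMap.neg_apply, LinearMap.flip_apply, map_neg, hr a x y] <;> abel

end Corepresentation

section RightAction

variable {R M N : Type*} [CommRing R] [AddCommGroup M] [Module R M] [AddCommGroup N] [Module R N]
  {m : ℕ}

/-- The bilinear map `(z, a₁ ∧ … ∧ aₘ) ↦ f (z, a₁, …, aₘ)` induced by an alternating map `f`. For
the bracket of a Filippov algebra this is the right action `ω̄₀ʳ`, and the negative of its flip is
the left action `ω̄₀ˡ`. -/
noncomputable def wedgeRightAction (f : M [⋀^Fin (m + 1)]→ₗ[R] N) : M →ₗ[R] ⋀[R]^m M →ₗ[R] N :=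
  exteriorPower.alternatingMapLinearEquiv.toLinearMap ∘ₗ f.curryLeft

theorem wedgeRightAction_apply_ιMulti (f : M [⋀^Fin (m + 1)]→ₗ[R] N) (z : M) (a : Fin m → M) :
    wedgeRightAction f z (exteriorPower.ιMulti R m a) = f (Fin.cons z a) :=
  exteriorPower.alternatingMapLinearEquiv_apply_ιMulti (f.curryLeft z) a

theorem wedgeRightAction_wedgeRightAction {f : M [⋀^Fin (m + 1)]→ₗ[R] M}
    (hf : FundamentalIdentity f) {ω : ⋀[R]^m M →ₗ[R] ⋀[R]^m M →ₗ[R] ⋀[R]^m M}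
    (hω : ∀ a b : Fin m → M, ω (exteriorPower.ιMulti R m a) (exteriorPower.ιMulti R m b) =
      ∑ i, exteriorPower.ιMulti R m (Function.update a i (f (Fin.cons (a i) b))))
    (z : M) (x y : ⋀[R]^m M) :
    wedgeRightAction f (wedgeRightAction f z x) y =
      wedgeRightAction f (wedgeRightAction f z y) x + wedgeRightAction f z (ω x y) := by
  set r := wedgeRightAction f with hr
  have bilinear_identity : r ∘ₗ r z = (r ∘ₗ r z).flip + ω.compr₂ (r z) := by
    ext a b
    change r (r z (exteriorPower.ιMulti R m a)) (exteriorPower.ιMulti R m b) =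
      r (r z (exteriorPower.ιMulti R m b)) (exteriorPower.ιMulti R m a) +
        r z (ω (exteriorPower.ιMulti R m a) (exteriorPower.ιMulti R m b))
    simp only [hr, hω, map_sum, wedgeRightAction_apply_ιMulti]
    exact hf.cons_cons z a b
  exact LinearMap.congr_fun₂ bilinear_identity x y

theorem statement1_general (f : M [⋀^Fin (m + 1)]→ₗ[R] M) (hf : FundamentalIdentity f)
    (ω : ⋀[R]^m M →ₗ[R] ⋀[R]^m M →ₗ[R] ⋀[R]^m M)
    (hω : ∀ a b : Fin m → M, ω (exteriorPower.ιMulti R m a) (exteriorPower.ιMulti R m b) =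
      ∑ i, exteriorPower.ιMulti R m (Function.update a i (f (Fin.cons (a i) b)))) :
    ∃ (l : ⋀[R]^m M →ₗ[R] M →ₗ[R] M) (r : M →ₗ[R] ⋀[R]^m M →ₗ[R] M),
      (∀ (a : Fin m → M) (x : M), l (exteriorPower.ιMulti R m a) x = -f (Fin.cons x a)) ∧
      (∀ (x : M) (a : Fin m → M), r x (exteriorPower.ιMulti R m a) = f (Fin.cons x a)) ∧
      IsCorepresentation ω l r :=
  ⟨-(wedgeRightAction f).flip, wedgeRightAction f,
    fun a x => congrArg Neg.neg (wedgeRightAction_apply_ιMulti f x a),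
    wedgeRightAction_apply_ιMulti f,
    isCorepresentation_neg_flip (wedgeRightAction_wedgeRightAction hf hω)⟩

end RightAction

/-- Let `g` be an `n`-Filippov algebra over a field `K` of characteristic `≠ 2`
(write `n = m + 1`, `n ≥ 2`).  Then the actions `ω̄₀ˡ` and `ω̄₀ʳ`, determined by
`ω̄₀ˡ(a₁∧…∧a_{n-1}, x) = -[x,a₁,…,a_{n-1}]` and `ω̄₀ʳ(x, a₁∧…∧a_{n-1}) = [x,a₁,…,a_{n-1}]`,
are well defined on the exterior power `Lₙ(g) = g^{∧(n-1)}` and make `g` a co-representation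
over the Leibniz algebra `(Lₙ(g), ω̄₀)`. -/
theorem statement1 (K : Type) [Field K] (hchar : ringChar K ≠ 2)
    (g : Type) [AddCommGroup g] [Module K g] (m : ℕ) (hm : 1 ≤ m)
    (br : MultilinearMap K (fun _ : Fin (m+1) => g) g)
    (fund : ∀ (x : Fin (m+1) → g) (y : Fin m → g),
      br (Fin.cons (br x) y)
        = ∑ i : Fin (m+1), br (Function.update x i (br (Fin.cons (x i) y))))
    (alt : ∀ (x : Fin (m+1) → g) (i j : Fin (m+1)), i ≠ j → x i = x j → br x = 0)
    -- the Leibniz bracket ω̄₀ on Lₙ(g)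
    (ω₀bar : (⋀[K]^m g) →ₗ[K] (⋀[K]^m g) →ₗ[K] (⋀[K]^m g))
    (hω₀bar : ∀ a b : Fin m → g,
      ω₀bar (wedge K a) (wedge K b)
        = ∑ i : Fin m, wedge K (Function.update a i (br (Fin.cons (a i) b)))) :
    ∃ (l : (⋀[K]^m g) →ₗ[K] g →ₗ[K] g) (r : g →ₗ[K] (⋀[K]^m g) →ₗ[K] g),
      (∀ (a : Fin m → g) (x : g), l (wedge K a) x = - br (Fin.cons x a)) ∧
      (∀ (x : g) (a : Fin m → g), r x (wedge K a) = br (Fin.cons x a)) ∧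
      IsCorep ω₀bar l r := by
  let f : g [⋀^Fin (m + 1)]→ₗ[K] g :=
    { br with map_eq_zero_of_eq' := fun x i j hx hij => alt x i j hij hx }
  obtain ⟨l, r, hl, hr, h⟩ := statement1_general f fund ω₀bar hω₀bar
  exact ⟨l, r, hl, hr, h.left_bracket, h.left_right, h.right_right⟩
end

section
/- Let g be an n-Filippov algebra over K with n > 2 and dim_K g ≥ n. The canonical projections π₁^k : g ⊗ D_n(g)^{⊗(k+1)} → g ⊗ L_n(g)^{⊗(k+1)} are surjective and commute with the Loday boundaries of _nCL_*(g) and _nC_*(g), so that 0 → _nC^rel_*(g) → _nCL_*(g) → _nC_*(g) → 0 is a short exact sequence of chain complexes, where _nC^rel_k(g) := ker(π₁^k). Consequently there is a long exact sequence ⋯ → _nH^rel_{k−1}(g) → _nHL_k(g;K) → _nH^Lie_k(g;K) → _nH^rel_{k−2}(g) → ⋯ → _nH^rel_0(g) → _nHL_1(g;K) → _nH^Lie_1(g;K) → 0, and the induced map _nHL_0(g;K) → _nH^Lie_0(g;K) is an isomorphism. -/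
open scoped TensorProduct
open PiTensorProduct

/-- Quotient of a submodule `Z` (the cycles) by a submodule `B` of it (the boundaries). -/
def HqOf (K : Type) [Field K] (N : Type) [AddCommGroup N] [Module K N]
    (Z : Submodule K N) (B : Submodule K Z) : Type := Z ⧸ B

noncomputable instance (K : Type) [Field K] (N : Type) [AddCommGroup N] [Module K N]
    (Z : Submodule K N) (B : Submodule K Z) : AddCommGroup (HqOf K N Z B) :=
  inferInstanceAs (AddCommGroup (Z ⧸ B))

noncomputable instance (K : Type) [Field K] (N : Type) [AddCommGroup N] [Module K N]
    (Z : Submodule K N) (B : Submodule K Z) : Module K (HqOf K N Z B) :=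
  inferInstanceAs (Module K (Z ⧸ B))

/-- The class of a cycle in such a quotient. -/
def HqOf.mk (K : Type) [Field K] (N : Type) [AddCommGroup N] [Module K N]
    {Z : Submodule K N} {B : Submodule K Z} (x : Z) : HqOf K N Z B :=
  Submodule.Quotient.mk x

/-- Cycles in degree `k` of a nonnegatively graded chain complex (in degree `0` everything
is a cycle). -/
def cyclesC (K : Type) [Field K] (C : ℕ → Type) [∀ k, AddCommGroup (C k)]
    [∀ k, Module K (C k)] (d : ∀ k, C (k+1) →ₗ[K] C k) : ∀ k, Submodule K (C k)
  | 0 => ⊤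
  | (k+1) => LinearMap.ker (d k)

/-- Boundaries in degree `k`, as a submodule of the cycles. -/
def boundariesC (K : Type) [Field K] (C : ℕ → Type) [∀ k, AddCommGroup (C k)]
    [∀ k, Module K (C k)] (d : ∀ k, C (k+1) →ₗ[K] C k) (k : ℕ) :
    Submodule K (cyclesC K C d k) :=
  Submodule.comap (cyclesC K C d k).subtype (LinearMap.range (d k))

/-- Homology in degree `k` of a nonnegatively graded chain complex. -/
@[reducible] def homologyC (K : Type) [Field K] (C : ℕ → Type) [∀ k, AddCommGroup (C k)]
    [∀ k, Module K (C k)] (d : ∀ k, C (k+1) →ₗ[K] C k) (k : ℕ) : Type :=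
  HqOf K (C k) (cyclesC K C d k) (boundariesC K C d k)


noncomputable instance (K : Type) [Field K] (C : ℕ → Type) [∀ k, AddCommGroup (C k)]
    [∀ k, Module K (C k)] (d : ∀ k, C (k+1) →ₗ[K] C k) (k : ℕ) :
    AddCommGroup (homologyC K C d k) :=
  inferInstanceAs (AddCommGroup (HqOf K (C k) (cyclesC K C d k) (boundariesC K C d k)))

noncomputable instance (K : Type) [Field K] (C : ℕ → Type) [∀ k, AddCommGroup (C k)]
    [∀ k, Module K (C k)] (d : ∀ k, C (k+1) →ₗ[K] C k) (k : ℕ) :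
    Module K (homologyC K C d k) :=
  inferInstanceAs (Module K (HqOf K (C k) (cyclesC K C d k) (boundariesC K C d k)))

/-- Relative cycles in degree `k`: elements of the kernel subcomplex `ker P` (which sits in
chain degree `k+1`) killed by the boundary. -/
def relCyclesC (K : Type) [Field K] (C C' : ℕ → Type) [∀ k, AddCommGroup (C k)]
    [∀ k, Module K (C k)] [∀ k, AddCommGroup (C' k)] [∀ k, Module K (C' k)]
    (d : ∀ k, C (k+1) →ₗ[K] C k) (P : ∀ k, C k →ₗ[K] C' k) (k : ℕ) :
    Submodule K (C (k+1)) :=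
  LinearMap.ker (P (k+1)) ⊓ LinearMap.ker (d k)

/-- Relative boundaries in degree `k`, as a submodule of the relative cycles. -/
def relBoundariesC (K : Type) [Field K] (C C' : ℕ → Type) [∀ k, AddCommGroup (C k)]
    [∀ k, Module K (C k)] [∀ k, AddCommGroup (C' k)] [∀ k, Module K (C' k)]
    (d : ∀ k, C (k+1) →ₗ[K] C k) (P : ∀ k, C k →ₗ[K] C' k) (k : ℕ) :
    Submodule K (relCyclesC K C C' d P k) :=
  Submodule.comap (relCyclesC K C C' d P k).subtype
    (Submodule.map (d (k+1)) (LinearMap.ker (P (k+2))))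

/-- Homology in degree `k` of the kernel subcomplex `ker P` (sitting in chain degree
`k+1`). -/
@[reducible] def relHomologyC (K : Type) [Field K] (C C' : ℕ → Type) [∀ k, AddCommGroup (C k)]
    [∀ k, Module K (C k)] [∀ k, AddCommGroup (C' k)] [∀ k, Module K (C' k)]
    (d : ∀ k, C (k+1) →ₗ[K] C k) (P : ∀ k, C k →ₗ[K] C' k) (k : ℕ) : Type :=
  HqOf K (C (k+1)) (relCyclesC K C C' d P k) (relBoundariesC K C C' d P k)


noncomputable instance (K : Type) [Field K] (C C' : ℕ → Type) [∀ k, AddCommGroup (C k)]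
    [∀ k, Module K (C k)] [∀ k, AddCommGroup (C' k)] [∀ k, Module K (C' k)]
    (d : ∀ k, C (k+1) →ₗ[K] C k) (P : ∀ k, C k →ₗ[K] C' k) (k : ℕ) :
    AddCommGroup (relHomologyC K C C' d P k) :=
  inferInstanceAs
    (AddCommGroup (HqOf K (C (k+1)) (relCyclesC K C C' d P k) (relBoundariesC K C C' d P k)))

noncomputable instance (K : Type) [Field K] (C C' : ℕ → Type) [∀ k, AddCommGroup (C k)]
    [∀ k, Module K (C k)] [∀ k, AddCommGroup (C' k)] [∀ k, Module K (C' k)]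
    (d : ∀ k, C (k+1) →ₗ[K] C k) (P : ∀ k, C k →ₗ[K] C' k) (k : ℕ) :
    Module K (relHomologyC K C C' d P k) :=
  inferInstanceAs
    (Module K (HqOf K (C (k+1)) (relCyclesC K C C' d P k) (relBoundariesC K C C' d P k)))

/-!
The sign of the bracket terms in the Loday boundary `d` is opposite to the one for which these
right actions would give `d ∘ d = 0`. Write `d = A + B`, where `A` collects the terms with the
action on the coefficients and `B` the bracket terms. Cartan's formula, which expresses the failure
of a boundary to commute with appending a tensor factor as a diagonal action, shows that `A - B` and
`B` square to zero; hence `d ∘ d = 2 A ∘ A`.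

The action of `Dₙ(g)` on `g` factors through `π : Dₙ(g) → Lₙ(g)`, so any linear section of `π`
intertwines the maps `A`, although it need not be a morphism of Leibniz algebras. It therefore lifts
a chain annihilated by `d ∘ d` to a chain annihilated by `d ∘ d`. This replaces `d ∘ d = 0` in the
diagram chase of the snake lemma, the homology being that of cycles modulo those boundaries that are
cycles.
-/

section TensorPower

variable {R : Type*} [CommRing R] {M : Type*} [AddCommGroup M] [Module R M]

variable (R M) in
/-- An endomorphism of `M`, made to act on the `i`-th factor of the tensor power `⨂[R]^k M`. -/
noncomputable def endAt {k : ℕ} (i : Fin k) : Module.End R M →ₗ[R] Module.End R (⨂[R]^k M) :=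
  (PiTensorProduct.mapMultilinear R (fun _ : Fin k => M) (fun _ => M)).toLinearMap
    (fun _ => LinearMap.id) i

theorem endAt_apply {k : ℕ} (i : Fin k) (φ : Module.End R M) :
    endAt R M i φ = PiTensorProduct.mapMonoidHom (Pi.mulSingle i φ) :=
  rfl

theorem endAt_tprod {k : ℕ} (i : Fin k) (φ : Module.End R M) (a : Fin k → M) :
    endAt R M i φ (tprod R a) = tprod R (Function.update a i (φ (a i))) := by
  refine (PiTensorProduct.map_tprod _ a).trans (congrArg _ (funext fun j => ?_))
  obtain rfl | hj := eq_or_ne j i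
  · simp
  · simp [hj]

theorem lie_endAt_self {k : ℕ} (i : Fin k) (φ ψ : Module.End R M) :
    ⁅endAt R M i φ, endAt R M i ψ⁆ = endAt R M i ⁅φ, ψ⁆ := by
  simp only [Ring.lie_def, map_sub, endAt_apply, Pi.mulSingle_mul, map_mul]

theorem commute_endAt {k : ℕ} {i j : Fin k} (hij : i ≠ j) (φ ψ : Module.End R M) :
    Commute (endAt R M i φ) (endAt R M j ψ) :=
  (Pi.mulSingle_commute (f := fun _ => Module.End R M) hij φ ψ).map PiTensorProduct.mapMonoidHom

variable (R M) in
/-- The derivation of the tensor power `⨂[R]^k M` extending an endomorphism `φ` of `M`, that is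
`∑ᵢ id ⊗ ⋯ ⊗ φ ⊗ ⋯ ⊗ id` with `φ` in position `i`. -/
noncomputable def derivationMap (k : ℕ) : Module.End R M →ₗ[R] Module.End R (⨂[R]^k M) :=
  ∑ i, endAt R M i

theorem derivationMap_tprod {k : ℕ} (φ : Module.End R M) (a : Fin k → M) :
    derivationMap R M k φ (tprod R a) = ∑ i, tprod R (Function.update a i (φ (a i))) := by
  simp only [derivationMap, LinearMap.sum_apply, endAt_tprod]

theorem lie_derivationMap (k : ℕ) (φ ψ : Module.End R M) :
    ⁅derivationMap R M k φ, derivationMap R M k ψ⁆ = derivationMap R M k ⁅φ, ψ⁆ := by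
  have lie_endAt (i j : Fin k) :
      ⁅endAt R M i φ, endAt R M j ψ⁆ = if i = j then endAt R M i ⁅φ, ψ⁆ else 0 := by
    split_ifs with h
    · rw [← h, lie_endAt_self]
    · exact (commute_endAt h φ ψ).lie_eq
  simp only [derivationMap, LinearMap.sum_apply, LieRing.of_associative_ring_bracket,
    Finset.sum_mul_sum] at lie_endAt ⊢
  rw [Finset.sum_comm (f := fun i j => endAt R M i ψ * endAt R M j φ)]
  simp only [← Finset.sum_sub_distrib, lie_endAt, Finset.sum_ite_eq, Finset.mem_univ, if_true]

end TensorPower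

section LodayComplex

variable {R : Type*} [CommRing R] {V H H' W : Type*}
  [AddCommGroup V] [Module R V] [AddCommGroup H] [Module R H] [AddCommGroup H'] [Module R H']
  [AddCommGroup W] [Module R W]

/-- `r` is a right action on `V` of the algebra `H` with bracket `ω`. For `r = ω` this is the
(right) Leibniz identity. -/
def IsRightAction (ω : H →ₗ[R] H →ₗ[R] H) (r : V →ₗ[R] H →ₗ[R] V) : Prop :=
  ∀ v a b, r v (ω a b) = r (r v a) b - r (r v b) a

theorem isRightAction_iff_flip_eq_lie {ω : H →ₗ[R] H →ₗ[R] H} {r : V →ₗ[R] H →ₗ[R] V} :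
    IsRightAction ω r ↔ ∀ a b, r.flip (ω a b) = ⁅(r.flip b : Module.End R V), r.flip a⁆ := by
  simp only [LinearMap.ext_iff, IsRightAction, Ring.lie_def, LinearMap.sub_apply,
    Module.End.mul_apply, LinearMap.flip_apply]
  exact ⟨fun h a b v => h v a b, fun h v a b => h a b v⟩

theorem isRightAction_zero (ω : H →ₗ[R] H →ₗ[R] H) :
    IsRightAction ω (0 : V →ₗ[R] H →ₗ[R] V) := by
  simp [IsRightAction]

theorem ext_tmul_tprod {k : ℕ} {f f' : V ⊗[R] (⨂[R]^k H) →ₗ[R] W}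
    (h : ∀ v hs, f (v ⊗ₜ tprod R hs) = f' (v ⊗ₜ tprod R hs)) : f = f' :=
  TensorProduct.ext <| LinearMap.ext fun v => PiTensorProduct.ext <| MultilinearMap.ext (h v)

variable (V) in
/-- Appending the tensor factor `a : H` on the right: `v ⊗ h₁ ⊗ ⋯ ⊗ h_k ↦ v ⊗ h₁ ⊗ ⋯ ⊗ h_k ⊗ a`. -/
noncomputable def snocFactor (k : ℕ) :
    H →ₗ[R] V ⊗[R] (⨂[R]^k H) →ₗ[R] V ⊗[R] (⨂[R]^(k + 1) H) :=
  LinearMap.lTensorHom V ∘ₗ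
    (PiTensorProduct.lift (tprod R : MultilinearMap R (fun _ : Fin (k + 1) => H) _).curryRight).flip

theorem snocFactor_tmul_tprod (k : ℕ) (a : H) (v : V) (hs : Fin k → H) :
    snocFactor V k a (v ⊗ₜ[R] tprod R hs) = v ⊗ₜ tprod R (Fin.snoc (α := fun _ => H) hs a) := by
  simp [snocFactor]

theorem ext_snocFactor {k : ℕ} {f f' : V ⊗[R] (⨂[R]^(k + 1) H) →ₗ[R] W}
    (h : ∀ a x, f (snocFactor V k a x) = f' (snocFactor V k a x)) : f = f' := by
  refine ext_tmul_tprod fun v hs => ?_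
  simpa only [snocFactor_tmul_tprod, Fin.snoc_init_self] using
    h (hs (Fin.last k)) (v ⊗ₜ tprod R (Fin.init hs))

/-- The diagonal action of `h : H` on `V ⊗ H^{⊗k}`, by `r` on the coefficients and by right
multiplication with `h` on each tensor factor. -/
noncomputable def diagonalAction (ω : H →ₗ[R] H →ₗ[R] H) (r : V →ₗ[R] H →ₗ[R] V) (k : ℕ) :
    H →ₗ[R] Module.End R (V ⊗[R] (⨂[R]^k H)) :=
  LinearMap.rTensorHom _ ∘ₗ r.flip + LinearMap.lTensorHom V ∘ₗ derivationMap R H k ∘ₗ ω.flip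

section diagonalAction

variable (ω : H →ₗ[R] H →ₗ[R] H) (r : V →ₗ[R] H →ₗ[R] V)

theorem diagonalAction_tmul_tprod (k : ℕ) (h : H) (v : V) (hs : Fin k → H) :
    diagonalAction ω r k h (v ⊗ₜ tprod R hs) =
      r v h ⊗ₜ tprod R hs + ∑ i, v ⊗ₜ tprod R (Function.update hs i (ω (hs i) h)) := by
  simp [diagonalAction, derivationMap_tprod, TensorProduct.tmul_sum]

theorem diagonalAction_snocFactor (k : ℕ) (h a : H) (x : V ⊗[R] (⨂[R]^k H)) :
    diagonalAction ω r (k + 1) h (snocFactor V k a x) =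
      snocFactor V k a (diagonalAction ω r k h x) + snocFactor V k (ω a h) x := by
  suffices diagonalAction ω r (k + 1) h ∘ₗ snocFactor V k a =
      snocFactor V k a ∘ₗ diagonalAction ω r k h + snocFactor V k (ω a h) from
    LinearMap.congr_fun this x
  refine ext_tmul_tprod fun v hs => ?_
  simp only [LinearMap.comp_apply, LinearMap.add_apply, snocFactor_tmul_tprod,
    diagonalAction_tmul_tprod, map_add, map_sum, Fin.sum_univ_castSucc, Fin.snoc_castSucc,
    Fin.snoc_last, Fin.snoc_update, Fin.update_snoc_last, add_assoc]

theorem diagonalAction_sub (ω' : H →ₗ[R] H →ₗ[R] H) (r' : V →ₗ[R] H →ₗ[R] V) (k : ℕ) (h : H) :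
    diagonalAction (ω - ω') (r - r') k h = diagonalAction ω r k h - diagonalAction ω' r' k h := by
  refine ext_tmul_tprod fun v hs => ?_
  simp only [diagonalAction_tmul_tprod, LinearMap.sub_apply, TensorProduct.sub_tmul,
    MultilinearMap.map_update_sub, TensorProduct.tmul_sub, Finset.sum_sub_distrib]
  abel

variable {ω r}

theorem IsRightAction.diagonalAction_apply_apply (hω : IsRightAction ω ω) (hr : IsRightAction ω r)
    (k : ℕ) (a b : H) :
    diagonalAction ω r k (ω a b) = ⁅diagonalAction ω r k b, diagonalAction ω r k a⁆ := by
  rw [isRightAction_iff_flip_eq_lie] at hω hr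
  simp only [diagonalAction, LinearMap.add_apply, LinearMap.comp_apply, hω, hr,
    ← lie_derivationMap]
  simp only [LinearMap.coe_rTensorHom, LinearMap.coe_lTensorHom, Ring.lie_def,
    Module.End.mul_eq_comp, LinearMap.add_comp, LinearMap.comp_add, LinearMap.rTensor_sub,
    LinearMap.lTensor_sub, LinearMap.rTensor_comp, LinearMap.lTensor_comp,
    LinearMap.rTensor_comp_lTensor, LinearMap.lTensor_comp_rTensor]
  abel

end diagonalAction

section IsLodayBoundary

/-- The family `d` is the Loday boundary of the complex with coefficients in `V`: the sign is
`(-1) ^ (j + 1)` on the terms `r v h_j` and `(-1) ^ j` on the terms `ω h_i h_j`, where `h_j` is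
removed and the value is put in position `i` (`j` counts from `0`). -/
def IsLodayBoundary (ω : H →ₗ[R] H →ₗ[R] H) (r : V →ₗ[R] H →ₗ[R] V)
    (d : ∀ k, V ⊗[R] (⨂[R]^(k + 1) H) →ₗ[R] V ⊗[R] (⨂[R]^k H)) : Prop :=
  ∀ (k : ℕ) (v : V) (hs : Fin (k + 1) → H),
    d k (v ⊗ₜ[R] tprod R hs) =
      (∑ j : Fin (k + 1), ((-1 : R) ^ ((j : ℕ) + 1)) •
        ((r v (hs j)) ⊗ₜ[R] tprod R (fun t => hs (j.succAbove t)))) +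
      ∑ j : Fin (k + 1), ∑ i ∈ Finset.univ.filter (fun i : Fin (k + 1) => i < j),
        ((-1 : R) ^ ((j : ℕ))) •
          (v ⊗ₜ[R] tprod R
            (fun t => Function.update hs i (ω (hs i) (hs j)) (j.succAbove t)))

/-- Cartan's formula for a family of maps `d`: the failure of `d` to commute with appending a
tensor factor `a` is, up to sign, the diagonal action of `a`. -/
structure HasCartanFormula (ω : H →ₗ[R] H →ₗ[R] H) (r : V →ₗ[R] H →ₗ[R] V)
    (d : ∀ k, V ⊗[R] (⨂[R]^(k + 1) H) →ₗ[R] V ⊗[R] (⨂[R]^k H)) : Prop where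
  snocFactor_zero : ∀ a x, d 0 (snocFactor V 0 a x) = -diagonalAction ω r 0 a x
  snocFactor_succ : ∀ k a x, d (k + 1) (snocFactor V (k + 1) a x) =
    snocFactor V k a (d k x) + (-1 : R) ^ k • diagonalAction ω r (k + 1) a x

theorem snoc_comp_succAbove_castSucc {α : Type*} {k : ℕ} (hs : Fin (k + 1) → α) (a : α)
    (j : Fin (k + 1)) :
    (fun t => Fin.snoc (α := fun _ => α) hs a (j.castSucc.succAbove t)) =
      Fin.snoc (α := fun _ => α) (fun t => hs (j.succAbove t)) a := by
  ext t
  cases t using Fin.lastCases with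
  | last => simp
  | cast t => simp [Fin.castSucc_succAbove_castSucc]

variable {ω ω' : H →ₗ[R] H →ₗ[R] H} {r r' : V →ₗ[R] H →ₗ[R] V}
  {d d' : ∀ k, V ⊗[R] (⨂[R]^(k + 1) H) →ₗ[R] V ⊗[R] (⨂[R]^k H)}

theorem IsLodayBoundary.snocFactor_zero (hd : IsLodayBoundary ω r d) (a : H)
    (x : V ⊗[R] (⨂[R]^0 H)) :
    d 0 (snocFactor V 0 a x) = -diagonalAction (-ω) r 0 a x := by
  suffices d 0 ∘ₗ snocFactor V 0 a = -diagonalAction (-ω) r 0 a from LinearMap.congr_fun this x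
  refine ext_tmul_tprod fun v hs => ?_
  have snoc_zero : (Fin.snoc hs a : Fin 1 → H) 0 = a := Fin.snoc_last (α := fun _ => H) a hs
  simp [snocFactor_tmul_tprod, diagonalAction_tmul_tprod, hd 0, snoc_zero,
    Subsingleton.elim _ hs]

theorem IsLodayBoundary.snocFactor_succ (hd : IsLodayBoundary ω r d) (k : ℕ) (a : H)
    (x : V ⊗[R] (⨂[R]^(k + 1) H)) :
    d (k + 1) (snocFactor V (k + 1) a x) =
      snocFactor V k a (d k x) + (-1 : R) ^ k • diagonalAction (-ω) r (k + 1) a x := by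
  suffices d (k + 1) ∘ₗ snocFactor V (k + 1) a =
      snocFactor V k a ∘ₗ d k + (-1 : R) ^ k • diagonalAction (-ω) r (k + 1) a from
    LinearMap.congr_fun this x
  refine ext_tmul_tprod fun v hs => ?_
  have not_last_lt (j : Fin (k + 2)) : ¬Fin.last (k + 1) < j := (Fin.le_last j).not_gt
  simp only [LinearMap.comp_apply, LinearMap.add_apply, LinearMap.smul_apply, LinearMap.neg_apply,
    snocFactor_tmul_tprod, diagonalAction_tmul_tprod, hd (k + 1), hd k, map_add, map_sum, map_smul,
    MultilinearMap.map_update_neg, TensorProduct.tmul_neg, Finset.sum_neg_distrib]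
  simp only [Finset.sum_filter, Fin.sum_univ_castSucc (n := k + 1), snoc_comp_succAbove_castSucc,
    Fin.snoc_castSucc, Fin.snoc_last, Fin.succAbove_last, Fin.castSucc_lt_castSucc_iff,
    Fin.castSucc_lt_last, not_last_lt, if_true, if_false, add_zero, Fin.val_castSucc, Fin.val_last,
    ← Fin.snoc_update]
  simp only [pow_succ, mul_neg, mul_one, neg_smul, neg_neg, smul_add, smul_neg, Finset.smul_sum,
    Finset.sum_neg_distrib]
  abel

theorem IsLodayBoundary.hasCartanFormula (hd : IsLodayBoundary ω r d) :
    HasCartanFormula (-ω) r d :=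
  ⟨hd.snocFactor_zero, hd.snocFactor_succ⟩

theorem HasCartanFormula.sub (hd : HasCartanFormula ω r d) (hd' : HasCartanFormula ω' r' d') :
    HasCartanFormula (ω - ω') (r - r') fun k => d k - d' k where
  snocFactor_zero a x := by
    simp only [LinearMap.sub_apply, hd.snocFactor_zero, hd'.snocFactor_zero, diagonalAction_sub]
    abel
  snocFactor_succ k a x := by
    simp only [LinearMap.sub_apply, hd.snocFactor_succ, hd'.snocFactor_succ, diagonalAction_sub,
      map_sub, smul_sub]
    abel

theorem HasCartanFormula.comp_diagonalAction (hd : HasCartanFormula ω r d)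
    (hω : IsRightAction ω ω) (hr : IsRightAction ω r) (k : ℕ) (h : H) :
    d k ∘ₗ diagonalAction ω r (k + 1) h = diagonalAction ω r k h ∘ₗ d k := by
  have diagonalAction_comm (k : ℕ) (a : H) (x : V ⊗[R] (⨂[R]^k H)) :
      diagonalAction ω r k a (diagonalAction ω r k h x) =
        diagonalAction ω r k h (diagonalAction ω r k a x) - diagonalAction ω r k (ω a h) x := by
    rw [hω.diagonalAction_apply_apply hr, Ring.lie_def]
    exact (sub_sub_cancel _ _).symm
  induction k with
  | zero =>
    refine ext_snocFactor fun a x => ?_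
    simp only [LinearMap.comp_apply, diagonalAction_snocFactor, map_add, map_neg,
      hd.snocFactor_zero, diagonalAction_comm 0 a x]
    abel
  | succ k ih =>
    refine ext_snocFactor fun a x => ?_
    have ih := LinearMap.congr_fun ih x
    simp only [LinearMap.comp_apply] at ih
    simp only [LinearMap.comp_apply, diagonalAction_snocFactor, map_add, map_smul,
      hd.snocFactor_succ, ih, diagonalAction_comm (k + 1) a x, smul_sub]
    abel

theorem HasCartanFormula.comp_self (hd : HasCartanFormula ω r d)
    (hω : IsRightAction ω ω) (hr : IsRightAction ω r) (k : ℕ) : d k ∘ₗ d (k + 1) = 0 := by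
  have d_diagonalAction (k : ℕ) (h : H) (x : V ⊗[R] (⨂[R]^(k + 1) H)) :
      d k (diagonalAction ω r (k + 1) h x) = diagonalAction ω r k h (d k x) :=
    LinearMap.congr_fun (hd.comp_diagonalAction hω hr k h) x
  induction k with
  | zero =>
    refine ext_snocFactor fun a x => ?_
    simp [hd.snocFactor_zero, hd.snocFactor_succ, d_diagonalAction]
  | succ k ih =>
    refine ext_snocFactor fun a x => ?_
    have ih := LinearMap.congr_fun ih x
    simp only [LinearMap.comp_apply, LinearMap.zero_apply] at ih
    simp [hd.snocFactor_succ, d_diagonalAction, ih, pow_succ]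

end IsLodayBoundary

section coefficientBoundary

variable (R H) in
/-- The map `⨂[R]^(k + 1) H → H ⊗ ⨂[R]^k H` taking the `j`-th tensor factor to the front. -/
noncomputable def factorToFront {k : ℕ} (j : Fin (k + 1)) :
    (⨂[R]^(k + 1) H) →ₗ[R] H ⊗[R] (⨂[R]^k H) :=
  PiTensorProduct.lift <| LinearMap.uncurryMid j <|
    (PiTensorProduct.lift (R := R)).symm.toLinearMap ∘ₗ TensorProduct.mk R H (⨂[R]^k H)

theorem factorToFront_tprod {k : ℕ} (j : Fin (k + 1)) (hs : Fin (k + 1) → H) :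
    factorToFront R H j (tprod R hs) = hs j ⊗ₜ tprod R fun t => hs (j.succAbove t) := by
  simp only [factorToFront, lift.tprod, LinearMap.uncurryMid_apply, LinearMap.coe_comp,
    LinearEquiv.coe_coe, Function.comp_apply, lift_symm, LinearMap.compMultilinearMap_apply,
    TensorProduct.mk_apply]
  rfl

/-- The part of the Loday boundary which involves only the action on the coefficients. -/
noncomputable def coefficientBoundary (r : V →ₗ[R] H →ₗ[R] V) (k : ℕ) :
    V ⊗[R] (⨂[R]^(k + 1) H) →ₗ[R] V ⊗[R] (⨂[R]^k H) :=
  ∑ j : Fin (k + 1), ((-1 : R) ^ ((j : ℕ) + 1)) • LinearMap.rTensor _ (TensorProduct.lift r) ∘ₗ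
    (TensorProduct.assoc R V H _).symm.toLinearMap ∘ₗ LinearMap.lTensor V (factorToFront R H j)

theorem isLodayBoundary_coefficientBoundary (r : V →ₗ[R] H →ₗ[R] V) :
    IsLodayBoundary 0 r (coefficientBoundary r) := by
  intro k v hs
  have tprod_update_zero {i j : Fin (k + 1)} (hij : i ≠ j) :
      PiTensorProduct.tprod R (fun t => Function.update hs i 0 (j.succAbove t)) = 0 := by
    obtain ⟨t, ht⟩ := Fin.exists_succAbove_eq hij
    exact (PiTensorProduct.tprod R).map_coord_zero t (by simp [ht])
  have bracket_terms (j : Fin (k + 1)) : ∑ i ∈ Finset.univ.filter (· < j), ((-1 : R) ^ (j : ℕ)) •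
      (v ⊗ₜ[R] tprod R (fun t => Function.update hs i 0 (j.succAbove t))) = 0 :=
    Finset.sum_eq_zero fun i hi => by
      rw [tprod_update_zero (Finset.mem_filter.mp hi).2.ne, TensorProduct.tmul_zero, smul_zero]
  simp [coefficientBoundary, factorToFront_tprod, bracket_terms]

end coefficientBoundary

section squareOfBoundary

variable {ω : H →ₗ[R] H →ₗ[R] H} {r : V →ₗ[R] H →ₗ[R] V}
  {d : ∀ k, V ⊗[R] (⨂[R]^(k + 1) H) →ₗ[R] V ⊗[R] (⨂[R]^k H)}

theorem IsLodayBoundary.comp_self_eq_coefficientBoundary (hd : IsLodayBoundary ω r d)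
    (hω : IsRightAction ω ω) (hr : IsRightAction ω r) (k : ℕ) :
    d k ∘ₗ d (k + 1) = 2 • (coefficientBoundary r k ∘ₗ coefficientBoundary r (k + 1)) := by
  -- Write `A` for the coefficient part. Both `A - d` and `A - (d - A)` have the opposite sign on
  -- the bracket terms, so they square to zero, with the actions `0` and `r` on the coefficients.
  have cartan_d := hd.hasCartanFormula
  have cartan_A := (isLodayBoundary_coefficientBoundary r).hasCartanFormula
  have cartan_bracket := cartan_A.sub cartan_d
  have cartan_signed := cartan_A.sub (cartan_d.sub cartan_A)
  simp only [neg_zero, zero_add, sub_neg_eq_add, sub_zero, sub_self]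
    at cartan_bracket cartan_signed
  refine LinearMap.ext fun x => ?_
  have bracket_sq := LinearMap.congr_fun (cartan_bracket.comp_self hω (isRightAction_zero ω) k) x
  have signed_sq := LinearMap.congr_fun (cartan_signed.comp_self hω hr k) x
  simp only [LinearMap.comp_apply, LinearMap.sub_apply, LinearMap.zero_apply, map_sub]
    at bracket_sq signed_sq
  simp only [LinearMap.comp_apply, LinearMap.smul_apply]
  linear_combination (norm := module) (2 : R) • bracket_sq - signed_sq

end squareOfBoundary

section tensorMap

variable (V) in
/-- The map `V ⊗ H^{⊗k} → V ⊗ H'^{⊗k}` induced by a linear map `f : H → H'`. -/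
noncomputable def tensorMap (f : H →ₗ[R] H') (k : ℕ) :
    V ⊗[R] (⨂[R]^k H) →ₗ[R] V ⊗[R] (⨂[R]^k H') :=
  LinearMap.lTensor V (PiTensorProduct.map fun _ => f)

theorem tensorMap_tmul_tprod (f : H →ₗ[R] H') (k : ℕ) (v : V) (hs : Fin k → H) :
    tensorMap V f k (v ⊗ₜ tprod R hs) = v ⊗ₜ tprod R fun i => f (hs i) :=
  congrArg (v ⊗ₜ ·) (PiTensorProduct.map_tprod _ hs)

theorem IsLodayBoundary.tensorMap_comp {ω : H →ₗ[R] H →ₗ[R] H} {r : V →ₗ[R] H →ₗ[R] V}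
    {d : ∀ k, V ⊗[R] (⨂[R]^(k + 1) H) →ₗ[R] V ⊗[R] (⨂[R]^k H)} (hd : IsLodayBoundary ω r d)
    {ω' : H' →ₗ[R] H' →ₗ[R] H'} {r' : V →ₗ[R] H' →ₗ[R] V}
    {d' : ∀ k, V ⊗[R] (⨂[R]^(k + 1) H') →ₗ[R] V ⊗[R] (⨂[R]^k H')}
    (hd' : IsLodayBoundary ω' r' d') {f : H →ₗ[R] H'} (hω : ∀ a b, f (ω a b) = ω' (f a) (f b))
    (hr : ∀ v h, r' v (f h) = r v h) (k : ℕ) :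
    tensorMap V f k ∘ₗ d k = d' k ∘ₗ tensorMap V f (k + 1) := by
  refine ext_tmul_tprod fun v hs => ?_
  simp only [LinearMap.comp_apply, hd k, tensorMap_tmul_tprod, hd' k, map_add, map_sum, map_smul,
    hr, Function.apply_update (fun _ => f), hω]

theorem tensorMap_comp_coefficientBoundary {f : H →ₗ[R] H'} {r : V →ₗ[R] H →ₗ[R] V}
    {r' : V →ₗ[R] H' →ₗ[R] V} (hr : ∀ v h, r' v (f h) = r v h) (k : ℕ) :
    tensorMap V f k ∘ₗ coefficientBoundary r k =
      coefficientBoundary r' k ∘ₗ tensorMap V f (k + 1) :=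
  (isLodayBoundary_coefficientBoundary r).tensorMap_comp (isLodayBoundary_coefficientBoundary r')
    (by simp) hr k

theorem tensorMap_comp_of_rightInverse {f : H →ₗ[R] H'} {σ : H' →ₗ[R] H} (hσ : f ∘ₗ σ = .id)
    (k : ℕ) : tensorMap V f k ∘ₗ tensorMap V σ k = .id := by
  rw [tensorMap, tensorMap, ← LinearMap.lTensor_comp, ← PiTensorProduct.map_comp]
  simp [hσ]

section

variable {ω : H →ₗ[R] H →ₗ[R] H} {r : V →ₗ[R] H →ₗ[R] V}
  {d : ∀ k, V ⊗[R] (⨂[R]^(k + 1) H) →ₗ[R] V ⊗[R] (⨂[R]^k H)}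
  {ω' : H' →ₗ[R] H' →ₗ[R] H'} {r' : V →ₗ[R] H' →ₗ[R] V}
  {d' : ∀ k, V ⊗[R] (⨂[R]^(k + 1) H') →ₗ[R] V ⊗[R] (⨂[R]^k H')}

theorem IsLodayBoundary.tensorMap_comp_comp_self (hd : IsLodayBoundary ω r d)
    (hω : IsRightAction ω ω) (hr : IsRightAction ω r) (hd' : IsLodayBoundary ω' r' d')
    (hω' : IsRightAction ω' ω') (hr' : IsRightAction ω' r') {f : H →ₗ[R] H'}
    (hf : ∀ v h, r' v (f h) = r v h) (k : ℕ) :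
    tensorMap V f k ∘ₗ d k ∘ₗ d (k + 1) = (d' k ∘ₗ d' (k + 1)) ∘ₗ tensorMap V f (k + 2) := by
  rw [hd.comp_self_eq_coefficientBoundary hω hr, hd'.comp_self_eq_coefficientBoundary hω' hr',
    LinearMap.comp_smul, LinearMap.smul_comp, LinearMap.comp_assoc,
    ← tensorMap_comp_coefficientBoundary hf, ← LinearMap.comp_assoc,
    tensorMap_comp_coefficientBoundary hf, LinearMap.comp_assoc]

theorem IsLodayBoundary.ker_comp_self_le_map_tensorMap (hd : IsLodayBoundary ω r d)
    (hω : IsRightAction ω ω) (hr : IsRightAction ω r) (hd' : IsLodayBoundary ω' r' d')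
    (hω' : IsRightAction ω' ω') (hr' : IsRightAction ω' r') {f : H →ₗ[R] H'} {σ : H' →ₗ[R] H}
    (hσ : f ∘ₗ σ = .id) (hf : ∀ v h, r' v (f h) = r v h) (k : ℕ) :
    LinearMap.ker (d' k ∘ₗ d' (k + 1)) ≤
      (LinearMap.ker (d k ∘ₗ d (k + 1))).map (tensorMap V f (k + 2)) := by
  have hrσ (v : V) (h : H') : r v (σ h) = r' v h := by
    rw [← hf, ← LinearMap.comp_apply f, hσ, LinearMap.id_apply]
  intro z hz
  refine ⟨tensorMap V σ (k + 2) z, ?_, LinearMap.congr_fun (tensorMap_comp_of_rightInverse hσ _) z⟩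
  have := LinearMap.congr_fun (hd'.tensorMap_comp_comp_self hω' hr' hd hω hr hrσ k) z
  rw [LinearMap.comp_apply, LinearMap.mem_ker.mp hz, map_zero] at this
  exact this.symm

end

end tensorMap

end LodayComplex

section LongExactSequence

variable {K : Type} [Field K]

namespace HqOf

variable {N N' : Type} [AddCommGroup N] [Module K N] [AddCommGroup N'] [Module K N']
  {Z : Submodule K N} {Z' : Submodule K N'} (B' : Submodule K Z') (B : Submodule K Z)

/-- `HqOf.mk` as a linear map. -/
def mkLinear : Z →ₗ[K] HqOf K N Z B := B.mkQ

theorem mkLinear_surjective : Function.Surjective (mkLinear B) := B.mkQ_surjective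

variable {B B'}

theorem mkLinear_eq_zero {x : Z} : mkLinear B x = 0 ↔ x ∈ B := Submodule.Quotient.mk_eq_zero B

/-- The map between quotients of cycles by boundaries induced by a linear map that preserves cycles
and boundaries. -/
def map (f : N →ₗ[K] N') (hZ : ∀ x ∈ Z, f x ∈ Z') (hB : B ≤ B'.comap (f.restrict hZ)) :
    HqOf K N Z B →ₗ[K] HqOf K N' Z' B' :=
  B.mapQ B' (f.restrict hZ) hB

end HqOf

variable (C D : ℕ → Type) [∀ k, AddCommGroup (C k)] [∀ k, Module K (C k)]
  [∀ k, AddCommGroup (D k)] [∀ k, Module K (D k)]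
  (d : ∀ k, C (k + 1) →ₗ[K] C k) (δ : ∀ k, D (k + 1) →ₗ[K] D k) (P : ∀ k, C k →ₗ[K] D k)

/-- The inclusion of `ker P` and the projection `P` induce a long exact sequence
`⋯ → H_{k+2}(D) → H^rel_k → H_{k+1}(C) → H_{k+1}(D) → ⋯ → H_1(D) → 0` and an isomorphism
`H_0(C) ≃ H_0(D)`. -/
def HasRelLongExactSequence : Prop :=
  ∃ (inc : ∀ k : ℕ, relHomologyC K C D d P k →ₗ[K] homologyC K C d (k + 1))
    (proj : ∀ k : ℕ, homologyC K C d k →ₗ[K] homologyC K D δ k)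
    (conn : ∀ k : ℕ, homologyC K D δ (k + 2) →ₗ[K] relHomologyC K C D d P k),
    (∀ (k : ℕ) (x : C (k + 1)) (h₁ : x ∈ relCyclesC K C D d P k) (h₂ : x ∈ cyclesC K C d (k + 1)),
      inc k (HqOf.mk K (C (k + 1)) ⟨x, h₁⟩) = HqOf.mk K (C (k + 1)) ⟨x, h₂⟩) ∧
    (∀ (k : ℕ) (x : C k) (h₁ : x ∈ cyclesC K C d k) (h₂ : P k x ∈ cyclesC K D δ k),
      proj k (HqOf.mk K (C k) ⟨x, h₁⟩) = HqOf.mk K (D k) ⟨P k x, h₂⟩) ∧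
    (∀ k : ℕ, Function.Exact (conn k) (inc k)) ∧
    (∀ k : ℕ, Function.Exact (inc k) (proj (k + 1))) ∧
    (∀ k : ℕ, Function.Exact (proj (k + 2)) (conn k)) ∧
    Function.Surjective (proj 1) ∧
    Function.Bijective (proj 0)

/-- The map from the homology of `ker P` to the homology of `C` induced by the inclusion. -/
def relHomologyInclusion (k : ℕ) : relHomologyC K C D d P k →ₗ[K] homologyC K C d (k + 1) :=
  HqOf.map LinearMap.id (fun _ hx => hx.2) fun _ ⟨w, _, hw⟩ => ⟨w, hw⟩

variable {C D d δ P}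

theorem map_mem_cyclesC (comm : ∀ k x, P k (d k x) = δ k (P (k + 1) x)) :
    ∀ k, ∀ x ∈ cyclesC K C d k, P k x ∈ cyclesC K D δ k
  | 0, _, _ => Submodule.mem_top
  | k + 1, x, hx => by
    change δ k (P (k + 1) x) = 0
    rw [← comm, show d k x = 0 from hx, map_zero]

/-- The map induced by a chain map on homology. -/
def homologyMap (comm : ∀ k x, P k (d k x) = δ k (P (k + 1) x)) (k : ℕ) :
    homologyC K C d k →ₗ[K] homologyC K D δ k :=
  HqOf.map (P k) (map_mem_cyclesC comm k) fun _ ⟨w, hw⟩ =>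
    ⟨P (k + 1) w, (comm k w).symm.trans (congrArg (P k) hw)⟩

theorem homologyMap_zero_bijective (comm : ∀ k x, P k (d k x) = δ k (P (k + 1) x))
    (bij : Function.Bijective (P 0)) (surj : Function.Surjective (P 1)) :
    Function.Bijective (homologyMap comm 0) := by
  constructor
  · rw [injective_iff_map_eq_zero]
    intro y hy
    obtain ⟨⟨x, hx⟩, rfl⟩ := HqOf.mkLinear_surjective _ y
    obtain ⟨w', hw'⟩ := HqOf.mkLinear_eq_zero.mp hy
    obtain ⟨w, rfl⟩ := surj w'
    exact HqOf.mkLinear_eq_zero.mpr ⟨w, bij.injective ((comm 0 w).trans hw')⟩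
  · intro y
    obtain ⟨⟨z, hz⟩, rfl⟩ := HqOf.mkLinear_surjective _ y
    obtain ⟨x, rfl⟩ := bij.surjective z
    exact ⟨HqOf.mkLinear _ ⟨x, Submodule.mem_top⟩, rfl⟩

theorem homologyMap_one_surjective (comm : ∀ k x, P k (d k x) = δ k (P (k + 1) x))
    (inj : Function.Injective (P 0)) (surj : Function.Surjective (P 1)) :
    Function.Surjective (homologyMap comm 1) := by
  intro y
  obtain ⟨⟨z, hz⟩, rfl⟩ := HqOf.mkLinear_surjective _ y
  obtain ⟨x, rfl⟩ := surj z
  have hx : d 0 x = 0 := inj ((comm 0 x).trans (LinearMap.mem_ker.mp hz |>.trans (map_zero _).symm))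
  exact ⟨HqOf.mkLinear _ ⟨x, hx⟩, rfl⟩

theorem exact_relHomologyInclusion_homologyMap
    (comm : ∀ k x, P k (d k x) = δ k (P (k + 1) x)) {k : ℕ}
    (lift : LinearMap.ker (δ k ∘ₗ δ (k + 1)) ≤
      (LinearMap.ker (d k ∘ₗ d (k + 1))).map (P (k + 2))) :
    Function.Exact (relHomologyInclusion C D d P k) (homologyMap comm (k + 1)) := by
  intro y
  obtain ⟨⟨x, hx⟩, rfl⟩ := HqOf.mkLinear_surjective _ y
  constructor
  · intro hy
    obtain ⟨w', hw'⟩ := HqOf.mkLinear_eq_zero.mp hy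
    change δ (k + 1) w' = P (k + 1) x at hw'
    have hddw' : δ k (δ (k + 1) w') = 0 := by rw [hw']; exact map_mem_cyclesC comm (k + 1) x hx
    obtain ⟨w, hw, rfl⟩ := lift hddw'
    refine ⟨HqOf.mkLinear _ ⟨x - d (k + 1) w, ?_, sub_mem hx hw⟩, ?_⟩
    · exact LinearMap.mem_ker.mpr (by rw [map_sub, comm, hw', sub_self])
    · have hneg : d (k + 1) (-w) = x - d (k + 1) w - x := by rw [map_neg, sub_sub_cancel_left]
      exact (Submodule.Quotient.eq _).mpr ⟨-w, hneg⟩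
  · rintro ⟨z, hz⟩
    obtain ⟨⟨n, hn⟩, rfl⟩ := HqOf.mkLinear_surjective _ z
    rw [← hz]
    exact HqOf.mkLinear_eq_zero.mpr ⟨0, (map_zero _).trans hn.1.symm⟩

section connectingHom

variable (C D d P) in
/-- The domain of the zigzag defining the connecting homomorphism: chains of `C` whose boundary is
a cycle of `ker P`. -/
abbrev zigzag (k : ℕ) : Submodule K (C (k + 2)) :=
  (relCyclesC K C D d P k).comap (d (k + 1))

variable (C D d P) in
/-- The end `x ↦ [d x]` of the zigzag. -/
noncomputable def zigzagBoundary (k : ℕ) : zigzag C D d P k →ₗ[K] relHomologyC K C D d P k :=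
  HqOf.mkLinear _ ∘ₗ (d (k + 1)).submoduleComap _

/-- The start `x ↦ [P x]` of the zigzag. -/
noncomputable def zigzagMap (comm : ∀ k x, P k (d k x) = δ k (P (k + 1) x)) (k : ℕ) :
    zigzag C D d P k →ₗ[K] homologyC K D δ (k + 2) :=
  HqOf.mkLinear _ ∘ₗ (P (k + 2)).restrict fun x hx => (comm (k + 1) x).symm.trans hx.1

variable (comm : ∀ k x, P k (d k x) = δ k (P (k + 1) x))

theorem zigzagMap_surjective {k : ℕ}
    (lift : LinearMap.ker (δ k ∘ₗ δ (k + 1)) ≤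
      (LinearMap.ker (d k ∘ₗ d (k + 1))).map (P (k + 2))) :
    Function.Surjective (zigzagMap comm k) := by
  intro y
  obtain ⟨⟨z, hz⟩, rfl⟩ := HqOf.mkLinear_surjective _ y
  change δ (k + 1) z = 0 at hz
  have hddz : δ k (δ (k + 1) z) = 0 := by rw [hz, map_zero]
  obtain ⟨x, hx, rfl⟩ := lift hddz
  exact ⟨⟨x, (comm (k + 1) x).trans hz, hx⟩, rfl⟩

theorem ker_zigzagMap_le_ker_zigzagBoundary {k : ℕ}
    (lift : LinearMap.ker (δ (k + 1) ∘ₗ δ (k + 2)) ≤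
      (LinearMap.ker (d (k + 1) ∘ₗ d (k + 2))).map (P (k + 3))) :
    LinearMap.ker (zigzagMap comm k) ≤ LinearMap.ker (zigzagBoundary C D d P k) := by
  rintro ⟨x, hx⟩ hPx
  obtain ⟨w', hw'⟩ := HqOf.mkLinear_eq_zero.mp hPx
  change δ (k + 2) w' = P (k + 2) x at hw'
  have hddw' : δ (k + 1) (δ (k + 2) w') = 0 := by rw [hw', ← comm]; exact hx.1
  obtain ⟨w, hw, rfl⟩ := lift hddw'
  change d (k + 1) (d (k + 2) w) = 0 at hw
  have hP : P (k + 2) (x - d (k + 2) w) = 0 := by rw [map_sub, comm, hw', sub_self]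
  have hd : d (k + 1) (x - d (k + 2) w) = d (k + 1) x := by rw [map_sub, hw, sub_zero]
  exact HqOf.mkLinear_eq_zero.mpr ⟨x - d (k + 2) w, hP, hd⟩

variable (lift : ∀ k, LinearMap.ker (δ k ∘ₗ δ (k + 1)) ≤
  (LinearMap.ker (d k ∘ₗ d (k + 1))).map (P (k + 2)))

/-- The connecting homomorphism `[P x] ↦ [d x]`, for `x` in the domain of the zigzag. -/
noncomputable def connectingHom (k : ℕ) :
    homologyC K D δ (k + 2) →ₗ[K] relHomologyC K C D d P k :=
  (LinearMap.ker (zigzagMap comm k)).liftQ (zigzagBoundary C D d P k)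
      (ker_zigzagMap_le_ker_zigzagBoundary comm (lift (k + 1))) ∘ₗ
    ((zigzagMap comm k).quotKerEquivOfSurjective (zigzagMap_surjective comm (lift k))).symm

theorem connectingHom_zigzagMap (k : ℕ) (x : zigzag C D d P k) :
    connectingHom comm lift k (zigzagMap comm k x) = zigzagBoundary C D d P k x := by
  have : (zigzagMap comm k).quotKerEquivOfSurjective (zigzagMap_surjective comm (lift k))
      (Submodule.Quotient.mk x) = zigzagMap comm k x := rfl
  rw [← this, connectingHom, LinearMap.comp_apply, LinearEquiv.coe_coe,
    LinearEquiv.symm_apply_apply, Submodule.liftQ_apply]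

theorem exact_connectingHom_relHomologyInclusion (k : ℕ) :
    Function.Exact (connectingHom comm lift k) (relHomologyInclusion C D d P k) := by
  intro y
  obtain ⟨⟨x, hx⟩, rfl⟩ := HqOf.mkLinear_surjective _ y
  constructor
  · intro hy
    obtain ⟨w, rfl⟩ := HqOf.mkLinear_eq_zero.mp hy
    exact ⟨zigzagMap comm k ⟨w, hx⟩, connectingHom_zigzagMap comm lift k ⟨w, hx⟩⟩
  · rintro ⟨z, hz⟩
    obtain ⟨⟨w, hw⟩, rfl⟩ := zigzagMap_surjective comm (lift k) z
    rw [← hz, connectingHom_zigzagMap]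
    exact HqOf.mkLinear_eq_zero.mpr ⟨w, rfl⟩

theorem exact_homologyMap_connectingHom (k : ℕ) :
    Function.Exact (homologyMap comm (k + 2)) (connectingHom comm lift k) := by
  intro y
  constructor
  · intro h
    obtain ⟨⟨x, hx⟩, rfl⟩ := zigzagMap_surjective comm (lift k) y
    rw [connectingHom_zigzagMap] at h
    obtain ⟨n, hPn, hdn⟩ := HqOf.mkLinear_eq_zero.mp h
    change P (k + 2) n = 0 at hPn
    change d (k + 1) n = d (k + 1) x at hdn
    have hcycle : d (k + 1) (x - n) = 0 := by rw [map_sub, hdn, sub_self]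
    refine ⟨HqOf.mkLinear _ ⟨x - n, hcycle⟩, congrArg (HqOf.mkLinear _) (Subtype.ext ?_)⟩
    change P (k + 2) (x - n) = P (k + 2) x
    rw [map_sub, hPn, sub_zero]
  · rintro ⟨z, rfl⟩
    obtain ⟨⟨c, hc⟩, rfl⟩ := HqOf.mkLinear_surjective _ z
    change d (k + 1) c = 0 at hc
    have hdc : d (k + 1) c ∈ relCyclesC K C D d P k := hc ▸ zero_mem _
    refine (connectingHom_zigzagMap comm lift k ⟨c, hdc⟩).trans ?_
    exact HqOf.mkLinear_eq_zero.mpr ⟨0, zero_mem _, (map_zero _).trans hc.symm⟩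

end connectingHom

theorem hasRelLongExactSequence (comm : ∀ k x, P k (d k x) = δ k (P (k + 1) x))
    (bij : Function.Bijective (P 0)) (surj : Function.Surjective (P 1))
    (lift : ∀ k, LinearMap.ker (δ k ∘ₗ δ (k + 1)) ≤
      (LinearMap.ker (d k ∘ₗ d (k + 1))).map (P (k + 2))) :
    HasRelLongExactSequence C D d δ P :=
  ⟨relHomologyInclusion C D d P, homologyMap comm, connectingHom comm lift,
    fun _ _ _ _ => rfl, fun _ _ _ _ => rfl,
    exact_connectingHom_relHomologyInclusion comm lift,
    fun k => exact_relHomologyInclusion_homologyMap comm (lift k),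
    exact_homologyMap_connectingHom comm lift,
    homologyMap_one_surjective comm bij.injective surj, homologyMap_zero_bijective comm bij surj⟩

end LongExactSequence

section SurjectiveMorphism

variable {R : Type*} [CommRing R] {V H H' : Type*} [AddCommGroup V] [Module R V]
  [AddCommGroup H] [Module R H] [AddCommGroup H'] [Module R H']

theorem tensorMap_zero_bijective {f : H →ₗ[R] H'} {σ : H' →ₗ[R] H} (hσ : f ∘ₗ σ = .id) :
    Function.Bijective (tensorMap V f 0) := by
  have left_inv : tensorMap V σ 0 ∘ₗ tensorMap V f 0 = .id := ext_tmul_tprod fun v hs => by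
    simp only [LinearMap.comp_apply, tensorMap_tmul_tprod, LinearMap.id_apply,
      Subsingleton.elim _ hs]
  have right_inv := tensorMap_comp_of_rightInverse (V := V) hσ 0
  exact Function.bijective_iff_has_inverse.mpr
    ⟨tensorMap V σ 0, LinearMap.congr_fun left_inv, LinearMap.congr_fun right_inv⟩

theorem IsRightAction.of_surjective {ω : H →ₗ[R] H →ₗ[R] H} {r : V →ₗ[R] H →ₗ[R] V}
    (h : IsRightAction ω r) {W : Type*} [AddCommGroup W] [Module R W]
    {ω' : H' →ₗ[R] H' →ₗ[R] H'} {r' : W →ₗ[R] H' →ₗ[R] W}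
    {f : H →ₗ[R] H'} (hf : Function.Surjective f) {p : V →ₗ[R] W} (hp : Function.Surjective p)
    (hω : ∀ a b, f (ω a b) = ω' (f a) (f b)) (hr : ∀ v a, p (r v a) = r' (p v) (f a)) :
    IsRightAction ω' r' := by
  intro w a' b'
  obtain ⟨v, rfl⟩ := hp w
  obtain ⟨a, rfl⟩ := hf a'
  obtain ⟨b, rfl⟩ := hf b'
  simp only [← hω, ← hr, h v a b, map_sub]

end SurjectiveMorphism

theorem tensorMap_surjective_and_hasRelLongExactSequence {K V H H' : Type} [Field K]
    [AddCommGroup V] [Module K V] [AddCommGroup H] [Module K H] [AddCommGroup H'] [Module K H']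
    {ω : H →ₗ[K] H →ₗ[K] H} {r : V →ₗ[K] H →ₗ[K] V}
    {ω' : H' →ₗ[K] H' →ₗ[K] H'} {r' : V →ₗ[K] H' →ₗ[K] V}
    {d : ∀ k, V ⊗[K] (⨂[K]^(k + 1) H) →ₗ[K] V ⊗[K] (⨂[K]^k H)}
    {d' : ∀ k, V ⊗[K] (⨂[K]^(k + 1) H') →ₗ[K] V ⊗[K] (⨂[K]^k H')}
    (hd : IsLodayBoundary ω r d) (hd' : IsLodayBoundary ω' r' d')
    (hω : IsRightAction ω ω) (hr : IsRightAction ω r)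
    {f : H →ₗ[K] H'} (hf : Function.Surjective f)
    (hfω : ∀ a b, f (ω a b) = ω' (f a) (f b)) (hfr : ∀ v h, r' v (f h) = r v h) :
    (∀ k, Function.Surjective (tensorMap V f k)) ∧
    (∀ k, tensorMap V f k ∘ₗ d k = d' k ∘ₗ tensorMap V f (k + 1)) ∧
    HasRelLongExactSequence (fun k => V ⊗[K] (⨂[K]^k H)) (fun k => V ⊗[K] (⨂[K]^k H')) d d'
      (tensorMap V f) := by
  obtain ⟨σ, hσ⟩ := f.exists_rightInverse_of_surjective (LinearMap.range_eq_top.mpr hf)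
  have hω' : IsRightAction ω' ω' := hω.of_surjective hf hf hfω hfω
  have hr' : IsRightAction ω' r' :=
    hr.of_surjective hf Function.surjective_id (p := .id) hfω fun v h => (hfr v h).symm
  have surj (k : ℕ) : Function.Surjective (tensorMap V f k) := fun z =>
    ⟨tensorMap V σ k z, LinearMap.congr_fun (tensorMap_comp_of_rightInverse hσ k) z⟩
  have comm := hd.tensorMap_comp hd' hfω hfr
  exact ⟨surj, comm, hasRelLongExactSequence (fun k => LinearMap.congr_fun (comm k))
    (tensorMap_zero_bijective hσ) (surj 1)
    (hd.ker_comp_self_le_map_tensorMap hω hr hd' hω' hr' hσ hfr)⟩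

section LeibnizNAlgebra

variable {R : Type*} [CommRing R] {g : Type*} [AddCommGroup g] [Module R g] {m : ℕ}

/-- `br` is a Leibniz `(m + 1)`-algebra bracket, that is, it satisfies the fundamental identity. -/
def IsLeibnizBracket (br : MultilinearMap R (fun _ : Fin (m + 1) => g) g) : Prop :=
  ∀ (x : Fin (m + 1) → g) (y : Fin m → g),
    br (Fin.cons (br x) y) = ∑ i, br (Function.update x i (br (Fin.cons (x i) y)))

variable {br : MultilinearMap R (fun _ : Fin (m + 1) => g) g}
  {ω₁ : (⨂[R]^m g) →ₗ[R] (⨂[R]^m g) →ₗ[R] (⨂[R]^m g)}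
  (hω₁ : ∀ a b : Fin m → g, ω₁ (tprod R a) (tprod R b) =
    ∑ i, tprod R (Function.update a i (br (Fin.cons (a i) b))))
  {ωr : g →ₗ[R] (⨂[R]^m g) →ₗ[R] g}
  (hωr : ∀ (x : g) (a : Fin m → g), ωr x (tprod R a) = br (Fin.cons x a))

include hω₁ hωr

theorem IsLeibnizBracket.isRightAction (hbr : IsLeibnizBracket br) : IsRightAction ω₁ ωr := by
  intro v a b
  suffices ω₁.compr₂ (ωr v) = ωr ∘ₗ ωr v - (ωr ∘ₗ ωr v).flip from LinearMap.congr_fun₂ this a b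
  ext a b
  have key := hbr (Fin.cons v a) b
  simp only [Fin.sum_univ_succ, Fin.cons_zero, Fin.cons_succ, Fin.update_cons_zero,
    ← Fin.cons_update] at key
  simp [hω₁, hωr, key]

theorem flip_eq_derivationMap_comp_flip : ω₁.flip = derivationMap R g m ∘ₗ ωr.flip := by
  ext b a
  simp [hω₁, hωr, derivationMap_tprod]

theorem IsLeibnizBracket.isRightAction_self (hbr : IsLeibnizBracket br) : IsRightAction ω₁ ω₁ := by
  have action := isRightAction_iff_flip_eq_lie.mp (hbr.isRightAction hω₁ hωr)
  rw [isRightAction_iff_flip_eq_lie]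
  intro a b
  simp only [flip_eq_derivationMap_comp_flip hω₁ hωr, LinearMap.comp_apply, action,
    lie_derivationMap]

end LeibnizNAlgebra

section ExteriorPower

variable {K : Type} [Field K] {g : Type} [AddCommGroup g] [Module K g] {m : ℕ}
  {π : (⨂[K]^m g) →ₗ[K] ⋀[K]^m g} (hπ : ∀ a : Fin m → g, π (tprod K a) = wedge K a)

include hπ

theorem surjective_of_tprod_eq_wedge : Function.Surjective π := by
  rw [← LinearMap.range_eq_top, eq_top_iff, ← exteriorPower.ιMulti_span K m g, Submodule.span_le]
  rintro _ ⟨a, rfl⟩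
  exact ⟨tprod K a, hπ a⟩

variable {br : MultilinearMap K (fun _ : Fin (m + 1) => g) g}

theorem map_bracket_of_tprod_eq_wedge
    {ω₁ : (⨂[K]^m g) →ₗ[K] (⨂[K]^m g) →ₗ[K] (⨂[K]^m g)}
    (hω₁ : ∀ a b : Fin m → g, ω₁ (tprod K a) (tprod K b) =
      ∑ i, tprod K (Function.update a i (br (Fin.cons (a i) b))))
    {ω₀bar : (⋀[K]^m g) →ₗ[K] (⋀[K]^m g) →ₗ[K] (⋀[K]^m g)}
    (hω₀bar : ∀ a b : Fin m → g, ω₀bar (wedge K a) (wedge K b) =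
      ∑ i, wedge K (Function.update a i (br (Fin.cons (a i) b)))) (a b : ⨂[K]^m g) :
    π (ω₁ a b) = ω₀bar (π a) (π b) := by
  suffices ω₁.compr₂ π = ω₀bar.compl₁₂ π π from LinearMap.congr_fun₂ this a b
  refine PiTensorProduct.ext (MultilinearMap.ext fun a =>
    PiTensorProduct.ext (MultilinearMap.ext fun b => ?_))
  simp [hω₁, hω₀bar, hπ]

theorem action_map_of_tprod_eq_wedge
    {ωrD : g →ₗ[K] (⨂[K]^m g) →ₗ[K] g}
    (hωrD : ∀ (x : g) (a : Fin m → g), ωrD x (tprod K a) = br (Fin.cons x a))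
    {ωrL : g →ₗ[K] (⋀[K]^m g) →ₗ[K] g}
    (hωrL : ∀ (x : g) (a : Fin m → g), ωrL x (wedge K a) = br (Fin.cons x a))
    (v : g) (h : ⨂[K]^m g) : ωrL v (π h) = ωrD v h := by
  suffices ωrL v ∘ₗ π = ωrD v from LinearMap.congr_fun this h
  refine PiTensorProduct.ext (MultilinearMap.ext fun a => ?_)
  simp [hωrD, hωrL, hπ]

end ExteriorPower

theorem statement8_general {K : Type} [Field K] {g : Type} [AddCommGroup g] [Module K g] {m : ℕ}
    {br : MultilinearMap K (fun _ : Fin (m + 1) => g) g} (hbr : IsLeibnizBracket br)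
    {ω₁ : (⨂[K]^m g) →ₗ[K] (⨂[K]^m g) →ₗ[K] (⨂[K]^m g)}
    (hω₁ : ∀ a b : Fin m → g, ω₁ (tprod K a) (tprod K b) =
      ∑ i, tprod K (Function.update a i (br (Fin.cons (a i) b))))
    {ω₀bar : (⋀[K]^m g) →ₗ[K] (⋀[K]^m g) →ₗ[K] (⋀[K]^m g)}
    (hω₀bar : ∀ a b : Fin m → g, ω₀bar (wedge K a) (wedge K b) =
      ∑ i, wedge K (Function.update a i (br (Fin.cons (a i) b))))
    {ωrD : g →ₗ[K] (⨂[K]^m g) →ₗ[K] g}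
    (hωrD : ∀ (x : g) (a : Fin m → g), ωrD x (tprod K a) = br (Fin.cons x a))
    {ωrL : g →ₗ[K] (⋀[K]^m g) →ₗ[K] g}
    (hωrL : ∀ (x : g) (a : Fin m → g), ωrL x (wedge K a) = br (Fin.cons x a))
    {dD : ∀ k, (g ⊗[K] (⨂[K]^(k + 1) (⨂[K]^m g))) →ₗ[K] (g ⊗[K] (⨂[K]^k (⨂[K]^m g)))}
    (hdD : IsLodayBoundary ω₁ ωrD dD)
    {dL : ∀ k, (g ⊗[K] (⨂[K]^(k + 1) (⋀[K]^m g))) →ₗ[K] (g ⊗[K] (⨂[K]^k (⋀[K]^m g)))}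
    (hdL : IsLodayBoundary ω₀bar ωrL dL)
    {π : (⨂[K]^m g) →ₗ[K] ⋀[K]^m g} (hπ : ∀ a : Fin m → g, π (tprod K a) = wedge K a)
    {P₁ : ∀ k, (g ⊗[K] (⨂[K]^k (⨂[K]^m g))) →ₗ[K] (g ⊗[K] (⨂[K]^k (⋀[K]^m g)))}
    (hP₁ : ∀ (k : ℕ) (v : g) (hs : Fin k → (⨂[K]^m g)),
      P₁ k (v ⊗ₜ[K] tprod K hs) = v ⊗ₜ[K] tprod K (fun i => π (hs i))) :
    (∀ k, Function.Surjective (P₁ k)) ∧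
    (∀ k, P₁ k ∘ₗ dD k = dL k ∘ₗ P₁ (k + 1)) ∧
    HasRelLongExactSequence (fun k => g ⊗[K] (⨂[K]^k (⨂[K]^m g)))
      (fun k => g ⊗[K] (⨂[K]^k (⋀[K]^m g))) dD dL P₁ := by
  obtain rfl : P₁ = tensorMap g π :=
    funext fun k => ext_tmul_tprod fun v hs => by rw [hP₁, tensorMap_tmul_tprod]
  exact tensorMap_surjective_and_hasRelLongExactSequence hdD hdL
    (hbr.isRightAction_self hω₁ hωrD) (hbr.isRightAction hω₁ hωrD)
    (surjective_of_tprod_eq_wedge hπ) (map_bracket_of_tprod_eq_wedge hπ hω₁ hω₀bar)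
    (action_map_of_tprod_eq_wedge hπ hωrD hωrL)

set_option maxHeartbeats 2000000 in
/-- Let `g` be an `n`-Filippov algebra over a field `K` of characteristic
`≠ 2`, with `n > 2` (write `n = m+1`, `2 ≤ m`) and `dim_K g ≥ n`.  The canonical projections
`π₁ᵏ : g ⊗ Dₙ(g)^{⊗(k+1)} → g ⊗ Lₙ(g)^{⊗(k+1)}` are surjective and commute with the Loday
boundaries of `ₙCL_*(g)` and `ₙC_*(g)`, so that `0 → ₙC^rel_*(g) → ₙCL_*(g) → ₙC_*(g) → 0`
is a short exact sequence of chain complexes, where `ₙC^rel_k(g) := ker π₁ᵏ`.  Consequently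
there is a long exact sequence
`⋯ → ₙH^rel_{k-1}(g) → ₙHL_k(g;K) → ₙH^Lie_k(g;K) → ₙH^rel_{k-2}(g) → ⋯
  → ₙH^rel_0(g) → ₙHL_1(g;K) → ₙH^Lie_1(g;K) → 0`,
and the induced map `ₙHL_0(g;K) → ₙH^Lie_0(g;K)` is an isomorphism. -/
theorem statement8 (K : Type) [Field K] (hchar : ringChar K ≠ 2)
    (g : Type) [AddCommGroup g] [Module K g] (m : ℕ) (hm : 2 ≤ m)
    (hdim : ((m + 1 : ℕ) : Cardinal) ≤ Module.rank K g)
    (br : MultilinearMap K (fun _ : Fin (m+1) => g) g)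
    (fund : ∀ (x : Fin (m+1) → g) (y : Fin m → g),
      br (Fin.cons (br x) y)
        = ∑ i : Fin (m+1), br (Function.update x i (br (Fin.cons (x i) y))))
    (alt : ∀ (x : Fin (m+1) → g) (i j : Fin (m+1)), i ≠ j → x i = x j → br x = 0)
    -- the Leibniz brackets ω₁ on Dₙ(g) and ω̄₀ on Lₙ(g)
    (ω₁ : (⨂[K]^m g) →ₗ[K] (⨂[K]^m g) →ₗ[K] (⨂[K]^m g))
    (hω₁ : ∀ a b : Fin m → g,
      ω₁ (tprod K a) (tprod K b)
        = ∑ i : Fin m, tprod K (Function.update a i (br (Fin.cons (a i) b))))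
    (ω₀bar : (⋀[K]^m g) →ₗ[K] (⋀[K]^m g) →ₗ[K] (⋀[K]^m g))
    (hω₀bar : ∀ a b : Fin m → g,
      ω₀bar (wedge K a) (wedge K b)
        = ∑ i : Fin m, wedge K (Function.update a i (br (Fin.cons (a i) b))))
    -- the right co-representation actions of Dₙ(g) and Lₙ(g) on g
    (ωrD : g →ₗ[K] (⨂[K]^m g) →ₗ[K] g)
    (hωrD : ∀ (x : g) (a : Fin m → g), ωrD x (tprod K a) = br (Fin.cons x a))
    (ωrL : g →ₗ[K] (⋀[K]^m g) →ₗ[K] g)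
    (hωrL : ∀ (x : g) (a : Fin m → g), ωrL x (wedge K a) = br (Fin.cons x a))
    -- the Loday boundary of ₙCL_*(g) = CL_*(Dₙ(g), g)
    (dD : ∀ k : ℕ, (g ⊗[K] (⨂[K]^(k+1) (⨂[K]^m g))) →ₗ[K] (g ⊗[K] (⨂[K]^k (⨂[K]^m g))))
    (hdD : ∀ (k : ℕ) (v : g) (hs : Fin (k+1) → (⨂[K]^m g)),
      dD k (v ⊗ₜ[K] tprod K hs)
        = (∑ j : Fin (k+1), ((-1 : K)^((j : ℕ)+1)) •
            ((ωrD v (hs j)) ⊗ₜ[K] tprod K (fun t => hs (j.succAbove t))))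
        + ∑ j : Fin (k+1), ∑ i ∈ Finset.univ.filter (fun i : Fin (k+1) => i < j),
            ((-1 : K)^((j : ℕ))) •
              (v ⊗ₜ[K] tprod K
                (fun t => Function.update hs i (ω₁ (hs i) (hs j)) (j.succAbove t))))
    -- the Loday boundary of ₙC_*(g) = CL_*(Lₙ(g), g)
    (dL : ∀ k : ℕ, (g ⊗[K] (⨂[K]^(k+1) (⋀[K]^m g))) →ₗ[K] (g ⊗[K] (⨂[K]^k (⋀[K]^m g))))
    (hdL : ∀ (k : ℕ) (v : g) (hs : Fin (k+1) → (⋀[K]^m g)),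
      dL k (v ⊗ₜ[K] tprod K hs)
        = (∑ j : Fin (k+1), ((-1 : K)^((j : ℕ)+1)) •
            ((ωrL v (hs j)) ⊗ₜ[K] tprod K (fun t => hs (j.succAbove t))))
        + ∑ j : Fin (k+1), ∑ i ∈ Finset.univ.filter (fun i : Fin (k+1) => i < j),
            ((-1 : K)^((j : ℕ))) •
              (v ⊗ₜ[K] tprod K
                (fun t => Function.update hs i (ω₀bar (hs i) (hs j)) (j.succAbove t))))
    -- the canonical projection π : Dₙ(g) → Lₙ(g) and the induced projections π₁ᵏ
    (π : (⨂[K]^m g) →ₗ[K] ⋀[K]^m g)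
    (hπ : ∀ a : Fin m → g, π (tprod K a) = wedge K a)
    (P₁ : ∀ k : ℕ, (g ⊗[K] (⨂[K]^k (⨂[K]^m g))) →ₗ[K] (g ⊗[K] (⨂[K]^k (⋀[K]^m g))))
    (hP₁ : ∀ (k : ℕ) (v : g) (hs : Fin k → (⨂[K]^m g)),
      P₁ k (v ⊗ₜ[K] tprod K hs) = v ⊗ₜ[K] tprod K (fun i => π (hs i))) :
    -- the projections are surjective …
    (∀ k : ℕ, Function.Surjective (P₁ k)) ∧
    -- … and commute with the Loday boundaries (short exact sequence of chain complexes,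
    -- the kernel subcomplex being `ₙC^rel_*(g)`) …
    (∀ k : ℕ, (P₁ k) ∘ₗ (dD k) = (dL k) ∘ₗ (P₁ (k+1))) ∧
    -- … consequently there is a long exact sequence as stated
    (∃ (inc : ∀ k : ℕ,
          (relHomologyC K (fun k => g ⊗[K] (⨂[K]^k (⨂[K]^m g)))
              (fun k => g ⊗[K] (⨂[K]^k (⋀[K]^m g))) dD P₁ k) →ₗ[K]
            (homologyC K (fun k => g ⊗[K] (⨂[K]^k (⨂[K]^m g))) dD (k+1)))
        (proj : ∀ k : ℕ,
          (homologyC K (fun k => g ⊗[K] (⨂[K]^k (⨂[K]^m g))) dD k) →ₗ[K]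
            (homologyC K (fun k => g ⊗[K] (⨂[K]^k (⋀[K]^m g))) dL k))
        (conn : ∀ k : ℕ,
          (homologyC K (fun k => g ⊗[K] (⨂[K]^k (⋀[K]^m g))) dL (k+2)) →ₗ[K]
            (relHomologyC K (fun k => g ⊗[K] (⨂[K]^k (⨂[K]^m g)))
              (fun k => g ⊗[K] (⨂[K]^k (⋀[K]^m g))) dD P₁ k)),
      -- `inc` is induced by the inclusion of the kernel subcomplex
      (∀ (k : ℕ) (x : g ⊗[K] (⨂[K]^(k+1) (⨂[K]^m g)))
          (h₁ : x ∈ relCyclesC K (fun k => g ⊗[K] (⨂[K]^k (⨂[K]^m g)))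
            (fun k => g ⊗[K] (⨂[K]^k (⋀[K]^m g))) dD P₁ k)
          (h₂ : x ∈ cyclesC K (fun k => g ⊗[K] (⨂[K]^k (⨂[K]^m g))) dD (k+1)),
        inc k (HqOf.mk K (g ⊗[K] (⨂[K]^(k+1) (⨂[K]^m g))) ⟨x, h₁⟩)
          = HqOf.mk K (g ⊗[K] (⨂[K]^(k+1) (⨂[K]^m g))) ⟨x, h₂⟩) ∧
      -- `proj` is induced by the projections `π₁`
      (∀ (k : ℕ) (x : g ⊗[K] (⨂[K]^k (⨂[K]^m g)))
          (h₁ : x ∈ cyclesC K (fun k => g ⊗[K] (⨂[K]^k (⨂[K]^m g))) dD k)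
          (h₂ : P₁ k x ∈ cyclesC K (fun k => g ⊗[K] (⨂[K]^k (⋀[K]^m g))) dL k),
        proj k (HqOf.mk K (g ⊗[K] (⨂[K]^k (⨂[K]^m g))) ⟨x, h₁⟩)
          = HqOf.mk K (g ⊗[K] (⨂[K]^k (⋀[K]^m g))) ⟨P₁ k x, h₂⟩) ∧
      -- exactness of `⋯ → ₙH^Lie_{k+2} → ₙH^rel_k → ₙHL_{k+1} → ₙH^Lie_{k+1} → ⋯`
      (∀ k : ℕ, Function.Exact (conn k) (inc k)) ∧
      (∀ k : ℕ, Function.Exact (inc k) (proj (k+1))) ∧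
      (∀ k : ℕ, Function.Exact (proj (k+2)) (conn k)) ∧
      -- the tail `ₙHL_1 → ₙH^Lie_1 → 0` and the isomorphism in degree `0`
      Function.Surjective (proj 1) ∧
      Function.Bijective (proj 0)) := by
  exact statement8_general fund hω₁ hω₀bar hωrD hωrL hdD hdL hπ hP₁
end
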